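/- arXiv:2209.12178 — 9 statements merged into one kernel-verified Lean document; each statement's English description precedes it below -/
import Mathlib

section
/- Let m ≥ 2 and N = 2m. Let L be the N×N complex matrix indexed by ZMod N (a residue i is called even/odd according to the parity of its representative in {0,…,N−1}, which is well defined since N is even) with entries: L i i = 2 if i is even and L i i = 1 if i is odd; L i (i−1) = −1 for every i; L i (i+1) = −1 if i is even and 0 if i is odd; all other entries equal 0. Then the characteristic polynomial of L equals (X² − 3X + 1)^m − 1 in ℂ[X]. -/
/-!
Splitting the vertices of the ring into even ones `2j` and odd ones `2j + 1`, both indexed by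
`j : ZMod m`, turns the Laplacian into the block matrix `[[2, -(1 + P)], [-1, 1]]`, where `P` is the
cyclic shift `P j k = [k = j - 1]` (`charpoly_reindex` with the bijection `vertex`). All blocks of
its characteristic matrix commute, so block elimination gives
`det ((X - 2) (X - 1) - 1 - P) = det (Y - P)` with `Y = X² - 3X + 1` (`det_block`).
This is the characteristic polynomial of `P` evaluated at `Y`. The characteristic polynomial of the
shift is `X ^ m - 1`, since it is monic of degree `m` and every one of the `m` distinct `m`-th roots
of unity is an eigenvalue (`charpoly_shift`).
-/

open Polynomial Matrix

/-- The cyclic shift matrix on `ZMod m`, with a `1` at each position `(j, j - 1)`. -/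
def shift (R : Type*) [Zero R] [One R] (m : ℕ) : Matrix (ZMod m) (ZMod m) R :=
  Matrix.of fun j k => if k = j - 1 then 1 else 0

/-- Each `m`-th root of unity `z` is an eigenvalue of the shift, with left eigenvector
`j ↦ z ^ j`. -/
lemma eval_charpoly_shift (m : ℕ) [NeZero m] (z : ℂ) (hz : z ^ m = 1) :
    (shift ℂ m).charpoly.eval z = 0 := by
  rw [Matrix.eval_charpoly, ← Matrix.exists_vecMul_eq_zero_iff]
  refine ⟨fun j => z ^ j.val, fun h => ?_, ?_⟩
  · have := congrFun h 0
    simp at this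
  · ext k
    have key : z ^ (k + 1).val = z ^ k.val * z := by
      rw [ZMod.val_add, ← pow_succ, ← pow_eq_pow_mod _ hz, pow_add, pow_succ]
      congr 1
      rw [ZMod.val_one_eq_one_mod, ← pow_eq_pow_mod _ hz, pow_one]
    have e : ∀ j : ZMod m, (k = j - 1) = (j = k + 1) := fun j => by
      rw [eq_sub_iff_add_eq, eq_comm (a := j)]
    simp [Matrix.vecMul, dotProduct, shift, e, Matrix.diagonal_apply, mul_sub, key]

lemma charpoly_shift (m : ℕ) [NeZero m] : (shift ℂ m).charpoly = X ^ m - 1 := by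
  have hm : m ≠ 0 := NeZero.ne m
  have hcard := (Complex.isPrimitiveRoot_exp m hm).card_nthRootsFinset
  have hdeg : (X ^ m - 1 : ℂ[X]).degree = m := by
    simpa using degree_X_pow_sub_C (Nat.pos_of_ne_zero hm) (1 : ℂ)
  have hmonic : (X ^ m - 1 : ℂ[X]).Monic := by
    simpa using monic_X_pow_sub_C (1 : ℂ) hm
  have hdegs : (shift ℂ m).charpoly.degree = m := by
    rw [Matrix.charpoly_degree_eq_dim, ZMod.card]
  refine eq_of_degree_sub_lt_of_eval_finset_eq (nthRootsFinset m (1 : ℂ)) ?_ fun z hz => ?_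
  · rw [hcard, ← hdegs]
    refine degree_sub_lt_left (hdegs.trans hdeg.symm) (Matrix.charpoly_monic _).ne_zero ?_
    rw [(Matrix.charpoly_monic _).leadingCoeff, hmonic.leadingCoeff]
  · have hz' : z ^ m = 1 := (mem_nthRootsFinset (Nat.pos_of_ne_zero hm) 1).1 hz
    rw [eval_charpoly_shift m z hz']
    simp [hz']

/-- Block elimination for the characteristic matrix: multiplying on the right by
`[[X - 1, 0], [-1, 1]]` makes it block triangular, and the factor `(X - 1) ^ m` cancels. -/
lemma det_block {n : Type*} [Fintype n] [DecidableEq n] (P : Matrix n n ℂ) :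
    (fromBlocks (2 : Matrix n n ℂ) (-(1 + P)) (-1) 1).charpoly
      = P.charpoly.comp (X ^ 2 - 3 * X + 1) := by
  have hcomp : P.charpoly.comp (X ^ 2 - 3 * X + 1)
      = (scalar n (X ^ 2 - 3 * X + 1 : ℂ[X]) - P.map C).det := by
    rw [← Matrix.eval_charpoly, Matrix.charpoly_map, Polynomial.comp, eval_map]
  have h2 : (2 : Matrix n n ℂ).map (C : ℂ → ℂ[X]) = scalar n (2 : ℂ[X]) := by
    ext1 i j
    by_cases h : i = j <;> simp [h, Matrix.ofNat_apply, map_ofNat C 2]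
  have h1 : (1 : Matrix n n ℂ).map (C : ℂ → ℂ[X]) = 1 := by simp
  have hc : (fromBlocks (2 : Matrix n n ℂ) (-(1 + P)) (-1) 1).charmatrix
      = fromBlocks (scalar n (X - 2 : ℂ[X])) (1 + P.map C) 1 (scalar n (X - 1 : ℂ[X])) := by
    rw [Matrix.charmatrix_fromBlocks]
    congr 1
    · rw [charmatrix, RingHom.mapMatrix_apply, h2, ← map_sub]
    · ext1 i j
      simp [Matrix.one_apply, apply_ite C]
    · ext1 i j
      simp [Matrix.one_apply, apply_ite C]
    · rw [Matrix.charmatrix_one]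
      rfl
  have hmul : fromBlocks (scalar n (X - 2 : ℂ[X])) (1 + P.map C) 1 (scalar n (X - 1 : ℂ[X]))
        * fromBlocks (scalar n (X - 1 : ℂ[X])) 0 (-1) 1
      = fromBlocks (scalar n (X ^ 2 - 3 * X + 1 : ℂ[X]) - P.map C) (1 + P.map C) 0
          (scalar n (X - 1 : ℂ[X])) := by
    rw [fromBlocks_multiply]
    congr 1
    · rw [← map_mul, mul_neg, mul_one,
        show ((X - 2) * (X - 1) : ℂ[X]) = (X ^ 2 - 3 * X + 1) + 1 by ring, map_add, map_one]
      abel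
    · simp
    · simp
    · simp
  have hne : (scalar n (X - 1 : ℂ[X])).det ≠ 0 := by
    have : (X - 1 : ℂ[X]) ≠ 0 := by simpa using X_sub_C_ne_zero (1 : ℂ)
    simp [this]
  have hdet := congrArg det hmul
  rw [det_mul, det_fromBlocks_zero₁₂, det_fromBlocks_zero₂₁, det_one, mul_one] at hdet
  rw [hcomp, Matrix.charpoly, hc]
  exact mul_right_cancel₀ hne hdet

/-- The vertices of the ring: `inl j` is the even vertex `2j`, `inr j` the odd vertex `2j + 1`. -/
def vertex (m : ℕ) : ZMod m ⊕ ZMod m → ZMod (2 * m) :=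
  Sum.elim (fun j => ((2 * j.val : ℕ) : ZMod (2 * m))) fun j => ((2 * j.val + 1 : ℕ) : ZMod (2 * m))

lemma val_vertex_inl (m : ℕ) [NeZero m] (j : ZMod m) : (vertex m (.inl j)).val = 2 * j.val := by
  have := j.val_lt
  exact ZMod.val_cast_of_lt (by omega)

lemma val_vertex_inr (m : ℕ) [NeZero m] (j : ZMod m) :
    (vertex m (.inr j)).val = 2 * j.val + 1 := by
  have := j.val_lt
  exact ZMod.val_cast_of_lt (by omega)

lemma vertex_injective (m : ℕ) [NeZero m] : Function.Injective (vertex m) := by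
  rintro (j | j) (k | k) h <;> have h' := congrArg ZMod.val h <;>
    simp only [val_vertex_inl, val_vertex_inr] at h'
  · exact congrArg _ (ZMod.val_injective m (by omega))
  · omega
  · omega
  · exact congrArg _ (ZMod.val_injective m (by omega))

lemma vertex_inl_add_one (m : ℕ) (j : ZMod m) : vertex m (.inl j) + 1 = vertex m (.inr j) := by
  simp [vertex]

lemma vertex_inr_add_one (m : ℕ) [NeZero m] (j : ZMod m) :
    vertex m (.inr j) + 1 = vertex m (.inl (j + 1)) := by
  have h : j.val + 1 ≡ (j + 1).val [MOD m] := by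
    rw [← ZMod.natCast_eq_natCast_iff]
    simp
  have h2 := (ZMod.natCast_eq_natCast_iff _ _ (2 * m)).2 (h.mul_left' 2)
  simp only [vertex, Sum.elim_inl, Sum.elim_inr]
  rw [← h2]
  push_cast
  ring

lemma vertex_bijective (m : ℕ) [NeZero m] [NeZero (2 * m)] : Function.Bijective (vertex m) := by
  rw [Fintype.bijective_iff_injective_and_card]
  refine ⟨vertex_injective m, ?_⟩
  simp [ZMod.card, two_mul]

theorem stmt3 (m : ℕ) (hm : 2 ≤ m) :
    haveI : NeZero (2 * m) := ⟨by omega⟩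
    (Matrix.of (fun i k : ZMod (2 * m) =>
        if k = i then (if i.val % 2 = 0 then (2 : ℂ) else 1)
        else if k = i - 1 then -1
        else if k = i + 1 ∧ i.val % 2 = 0 then -1
        else 0)).charpoly
      = (X ^ 2 - 3 * X + 1) ^ m - 1 := by
  have : NeZero (2 * m) := ⟨by omega⟩
  have : NeZero m := ⟨by omega⟩
  have : Fact (1 < m) := ⟨hm⟩
  have hfin : (X ^ 2 - 3 * X + 1 : ℂ[X]) ^ m - 1
      = (shift ℂ m).charpoly.comp (X ^ 2 - 3 * X + 1) := by
    simp [charpoly_shift]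
  rw [hfin, ← det_block,
    ← Matrix.charpoly_reindex (Equiv.ofBijective (vertex m) (vertex_bijective m)).symm]
  congr 1
  have hinj : ∀ a b, vertex m a = vertex m b ↔ a = b := fun _ _ => (vertex_injective m).eq_iff
  have hl : ∀ j, vertex m (.inl j) - 1 = vertex m (.inr (j - 1)) := fun j => by
    rw [sub_eq_iff_eq_add, vertex_inr_add_one, sub_add_cancel]
  have hr : ∀ j, vertex m (.inr j) - 1 = vertex m (.inl j) := fun j => by
    rw [sub_eq_iff_eq_add, vertex_inl_add_one]
  ext (j | j) (k | k)
  · simp [hinj, hl, vertex_inl_add_one, val_vertex_inl, Matrix.ofNat_apply, eq_comm]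
  · -- The predecessor and the successor of an even vertex are distinct because `2 ≤ m`.
    have hne : j ≠ j - 1 := fun h => one_ne_zero (sub_eq_self.1 h.symm)
    simp only [reindex_apply, submatrix_apply, Equiv.symm_symm, Equiv.ofBijective_apply, of_apply,
      hinj, hl, vertex_inl_add_one, val_vertex_inl, fromBlocks_apply₁₂, Matrix.neg_apply,
      Matrix.add_apply, Matrix.one_apply, shift]
    by_cases h : k = j - 1
    · subst h
      simp [hne]
    · by_cases h' : j = k
      · subst h'
        simp [h]
      · simp [h, h', Ne.symm h']
  · by_cases h : j = k
    · simp [hinj, hr, val_vertex_inr, h]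
    · simp [hinj, hr, val_vertex_inr, h, Ne.symm h, Nat.add_mod]
  · simp [hinj, hr, val_vertex_inr, Matrix.one_apply, Nat.add_mod, eq_comm]
end

section
/- Let m ≥ 2 and N = 2m. Let L be the N×N complex matrix indexed by ZMod N (a residue i is called even/odd according to the parity of its representative in {0,…,N−1}, which is well defined since N is even) with entries: L i i = 2 if i is even and L i i = 1 if i is odd; L i (i−1) = −1 for every i; L i (i+1) = −1 if i is even and 0 if i is odd; all other entries equal 0. Then every eigenvalue λ ∈ ℂ of L satisfies (λ² − 3λ + 1)^m = 1; consequently, writing x̃ = 2(Re λ − 3/2) and ỹ = 2·Im λ, every eigenvalue satisfies ((x̃ − √5)² + ỹ²)·((x̃ + √5)² + ỹ²) = 16, i.e., the spectrum of L lies on the Cassini ovals. -/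
/-!
Put `p = λ² - 3λ + 1` and let `v` be an eigenvector of `L` for `λ`. The odd rows of `L v = λ v` give
`v (i - 1) = (1 - λ) v i`, and the even rows give `(2 - λ) v i = v (i - 1) + v (i + 1)`. Eliminating
the even entries leaves the recursion `v (i - 2) = p v i` along the odd nodes. Going around the ring
once takes `m` such steps, so `p ^ m v i = v i` at every odd `i`. The odd entries determine the even
ones, so one of them is nonzero and `p ^ m = 1`. In particular `|p| = 1`, and since
`4 p = (2λ - 3)² - 5 = (2λ - 3 - √5) (2λ - 3 + √5)`, taking squared norms gives the Cassini curve.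
-/

/-- Going one step around a ring with an even number of nodes changes the parity. -/
theorem ringVal_add_one_mod_two (m : ℕ) [NeZero (2 * m)] (i : ZMod (2 * m)) :
    (i + 1).val % 2 = (i.val + 1) % 2 := by
  have h : ((i.val + 1 : ℕ) : ZMod (2 * m)) = i + 1 := by
    push_cast
    rw [ZMod.natCast_zmod_val]
  rw [← h, ZMod.val_natCast, Nat.mod_mul_right_mod]

/-- The entries of an eigenvector at the odd nodes obey a one-term recursion, which closes up
after one turn around the ring. -/
theorem pow_eq_one_of_ring_equations (m : ℕ) [NeZero (2 * m)] (lam : ℂ) (v : ZMod (2 * m) → ℂ)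
    (hv : v ≠ 0)
    (heven : ∀ i, i.val % 2 = 0 → (2 - lam) * v i = v (i - 1) + v (i + 1))
    (hodd : ∀ i, i.val % 2 = 1 → (1 - lam) * v i = v (i - 1)) :
    (lam ^ 2 - 3 * lam + 1) ^ m = 1 := by
  have hpar : ∀ i : ZMod (2 * m), i.val % 2 = ((i - 1).val + 1) % 2 := fun i => by
    simpa using ringVal_add_one_mod_two m (i - 1)
  have hstep : ∀ i : ZMod (2 * m), i.val % 2 = 1 →
      (i - 2).val % 2 = 1 ∧ (lam ^ 2 - 3 * lam + 1) * v i = v (i - 2) := by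
    intro i hi
    have e : i - 1 - 1 = i - 2 := by ring
    have h1 := hpar i
    have h2 := hpar (i - 1)
    have h3 := heven (i - 1) (by omega)
    rw [e] at h2 h3
    rw [sub_add_cancel] at h3
    exact ⟨by omega, by linear_combination h3 + (2 - lam) * hodd i hi⟩
  have hiter : ∀ (k : ℕ) (i : ZMod (2 * m)), i.val % 2 = 1 →
      (lam ^ 2 - 3 * lam + 1) ^ k * v i = v (i - 2 * k) := by
    intro k
    induction k with
    | zero => intro i _; simp
    | succ k ih =>
      intro i hi
      obtain ⟨h1, h2⟩ := hstep i hi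
      rw [pow_succ, mul_assoc, h2, ih _ h1]
      congr 1
      push_cast
      ring
  obtain ⟨i, hi, hvi⟩ : ∃ i : ZMod (2 * m), i.val % 2 = 1 ∧ v i ≠ 0 := by
    by_contra! hcon
    refine hv (funext fun i => ?_)
    rcases Nat.mod_two_eq_zero_or_one i.val with h | h
    · -- An even entry is a multiple of the odd entry that follows it.
      have h1 := ringVal_add_one_mod_two m i
      have h2 := hodd (i + 1) (by omega)
      rw [hcon (i + 1) (by omega), add_sub_cancel_right] at h2
      simpa using h2.symm
    · exact hcon i h
  have h := hiter m i hi
  have h0 : (2 : ZMod (2 * m)) * (m : ZMod (2 * m)) = 0 := by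
    have := ZMod.natCast_self (2 * m)
    push_cast at this
    exact this
  rw [h0, sub_zero] at h
  exact mul_right_cancel₀ hvi (by rw [h, one_mul])

theorem cassini_of_pow_eq_one (m : ℕ) (hm : m ≠ 0) (lam : ℂ)
    (h : (lam ^ 2 - 3 * lam + 1) ^ m = 1) :
    ((2 * (lam.re - 3 / 2) - Real.sqrt 5) ^ 2 + (2 * lam.im) ^ 2) *
      ((2 * (lam.re - 3 / 2) + Real.sqrt 5) ^ 2 + (2 * lam.im) ^ 2) = 16 := by
  have hn : Complex.normSq (lam ^ 2 - 3 * lam + 1) = 1 := by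
    rw [Complex.normSq_eq_norm_sq, Complex.norm_eq_one_of_pow_eq_one h hm, one_pow]
  have hs : Real.sqrt 5 ^ 2 = 5 := Real.sq_sqrt (by norm_num)
  simp only [Complex.normSq_apply, pow_two, Complex.add_re, Complex.sub_re, Complex.mul_re,
    Complex.add_im, Complex.sub_im, Complex.mul_im, Complex.one_re, Complex.one_im,
    Complex.re_ofNat, Complex.im_ofNat] at hn
  generalize Real.sqrt 5 = s at *
  generalize lam.re = x at *
  generalize lam.im = y at *
  -- With `X = 2 x - 3` and `Y = 2 y` the left side is `(X² + s² + Y²)² - 4 X² s²`.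
  linear_combination 16 * hn +
    (s ^ 2 + 5 + 2 * ((2 * x - 3) ^ 2 + (2 * y) ^ 2) - 4 * (2 * x - 3) ^ 2) * hs

theorem stmt5 (m : ℕ) (hm : 2 ≤ m) (lam : ℂ) :
    haveI : NeZero (2 * m) := ⟨by omega⟩
    (Matrix.of (fun i k : ZMod (2 * m) =>
        if k = i then (if i.val % 2 = 0 then (2 : ℂ) else 1)
        else if k = i - 1 then -1
        else if k = i + 1 ∧ i.val % 2 = 0 then -1
        else 0)).charpoly.IsRoot lam →
      (lam ^ 2 - 3 * lam + 1) ^ m = 1 ∧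
      ((2 * (lam.re - 3 / 2) - Real.sqrt 5) ^ 2 + (2 * lam.im) ^ 2) *
        ((2 * (lam.re - 3 / 2) + Real.sqrt 5) ^ 2 + (2 * lam.im) ^ 2) = 16 := by
  haveI : NeZero (2 * m) := ⟨by omega⟩
  intro hroot
  rw [Polynomial.IsRoot.def, Matrix.eval_charpoly] at hroot
  obtain ⟨v, hv, hLv⟩ := Matrix.exists_mulVec_eq_zero_iff.mpr hroot
  -- The ring has more than two nodes, so `i - 1`, `i`, `i + 1` are distinct.
  have h2 : (2 : ZMod (2 * m)) ≠ 0 := by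
    intro h
    have h' : ((2 : ℕ) : ZMod (2 * m)) = 0 := by exact_mod_cast h
    rw [ZMod.natCast_eq_zero_iff] at h'
    have := Nat.le_of_dvd (by norm_num) h'
    omega
  have h1 : (1 : ZMod (2 * m)) ≠ 0 := by
    intro h
    apply h2
    linear_combination 2 * h
  have hrow : ∀ i : ZMod (2 * m),
      (if i.val % 2 = 0 then (2 : ℂ) else 1) * v i - v (i - 1)
        + (if i.val % 2 = 0 then (-1 : ℂ) else 0) * v (i + 1) = lam * v i := by
    intro i
    have hi := congrFun hLv i
    rw [Matrix.sub_mulVec, Pi.sub_apply, Matrix.scalar_apply, Matrix.mulVec_diagonal,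
      Pi.zero_apply, sub_eq_zero] at hi
    rw [hi]
    have hentry : ∀ k : ZMod (2 * m),
        (if k = i then (if i.val % 2 = 0 then (2 : ℂ) else 1)
          else if k = i - 1 then -1
          else if k = i + 1 ∧ i.val % 2 = 0 then -1
          else 0) =
        (if k = i then (if i.val % 2 = 0 then (2 : ℂ) else 1) else 0)
          + (if k = i - 1 then -1 else 0)
          + (if k = i + 1 then (if i.val % 2 = 0 then (-1 : ℂ) else 0) else 0) := by
      intro k
      have ha : i ≠ i - 1 := fun h => h1 (by linear_combination h)
      have hb : i ≠ i + 1 := fun h => h1 (by linear_combination -h)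
      have hc : i - 1 ≠ i + 1 := fun h => h2 (by linear_combination -h)
      by_cases k1 : k = i
      · subst k1
        simp [ha, h1]
      · by_cases k2 : k = i - 1
        · subst k2
          simp [hc, k1]
        · by_cases k3 : k = i + 1 <;> simp [k1, k2, k3, h1, hc.symm]
    simp only [Matrix.mulVec, dotProduct, Matrix.of_apply, hentry, add_mul,
      Finset.sum_add_distrib, ite_mul (_ = _), zero_mul, Finset.sum_ite_eq', Finset.sum_ite_eq,
      Finset.mem_univ, if_true]
    ring
  have hpow := pow_eq_one_of_ring_equations m lam v hv
    (fun i hi => by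
      have := hrow i
      rw [if_pos hi, if_pos hi] at this
      linear_combination this)
    (fun i hi => by
      have := hrow i
      rw [if_neg (by omega), if_neg (by omega)] at this
      linear_combination this)
  exact ⟨hpow, cassini_of_pow_eq_one m (by omega) lam hpow⟩
end

section
/- Let m ≥ 2 and N = 3m. Let L be the N×N complex matrix indexed by ZMod N (the residue class of i modulo 3 is well defined on ZMod N since 3 divides N) with entries: L i i = 2 if i ≡ 0 (mod 3) and L i i = 1 otherwise; L i (i−1) = −1 for every i; L i (i+1) = −1 if i ≡ 0 (mod 3) and 0 otherwise; all other entries equal 0. Then the characteristic polynomial of L equals ((X − 1)·(X² − 3X + 1))^m − (−1)^m in ℂ[X]. -/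
/-!
The nodes are grouped into `m` consecutive triples, writing `i = 3 j + r`. In this ordering
`X - L` is a `3 × 3` block matrix whose `m × m` blocks are polynomials in the cyclic shift `S` of
`Fin m`: with `Y` standing for `S`, the array of blocks is
`!![X - 2, 1, Y; 1, X - 1, 0; 0, 1, X - 1]`.
The blocks commute, so the determinant can be taken twice (`Matrix.det_det`). The inner
determinant is `P + Y`, with `P = (X - 1) (X ^ 2 - 3 X + 1)`. The outer one is
`det (P + S) = P ^ m + (-1) ^ (m - 1)` (`det_scalar_add_shift`), because in the Leibniz expansion
only the identity and the full rotation contribute.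
-/

open Polynomial

/-- The cyclic shift of `Fin (n + 1)` as a matrix, with a one at every entry `(k + 1, k)`. -/
def shiftMat (R : Type*) [CommRing R] (n : ℕ) : Matrix (Fin (n + 1)) (Fin (n + 1)) R :=
  Matrix.of fun j k => if k + 1 = j then 1 else 0

open Fin.NatCast in
lemma perm_eq_one_or_finRotate {n : ℕ} (σ : Equiv.Perm (Fin (n + 1)))
    (h : ∀ i, σ i = i ∨ σ i = i + 1) : σ = 1 ∨ σ = finRotate (n + 1) := by
  by_cases h1 : ∀ i, σ i = i
  · left; ext i; simp [h1 i]
  · right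
    push Not at h1
    obtain ⟨a, ha⟩ := h1
    -- Once `σ` moves `i` to `i + 1`, injectivity forces it to move `i + 1` as well.
    have step : ∀ i, σ i ≠ i → σ (i + 1) ≠ i + 1 := by
      intro i hi hi'
      have h2 := (h i).resolve_left hi
      have h3 : i = i + 1 := σ.injective (h2.trans hi'.symm)
      exact hi (by rw [h2, ← h3])
    have all : ∀ t : ℕ, σ (a + (t : Fin (n + 1))) ≠ a + (t : Fin (n + 1)) := by
      intro t
      induction t with
      | zero => simpa using ha
      | succ t ih =>
        have := step _ ih
        rwa [add_assoc, ← Nat.cast_succ] at this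
    refine Equiv.ext fun i => ?_
    have h4 := all (i - a).val
    rw [Fin.cast_val_eq_self, add_sub_cancel] at h4
    rw [finRotate_apply]
    exact (h i).resolve_left h4

/-- In the Leibniz expansion only the identity and the full rotation contribute. They are different
permutations because the size is at least two. -/
lemma det_scalar_add_shift {R : Type*} [CommRing R] (n : ℕ) (hn : 1 ≤ n) (p : R) :
    (Matrix.scalar (Fin (n + 1)) p + shiftMat R n).det = p ^ (n + 1) + (-1) ^ n := by
  have hne : ∀ i : Fin (n + 1), i + 1 ≠ i := by
    obtain ⟨k, rfl⟩ : ∃ k, n = k + 1 := ⟨n - 1, by omega⟩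
    intro i h
    have : (1 : Fin (k + 1 + 1)) = 0 := by simp at h
    exact one_ne_zero this
  have hrot : finRotate (n + 1) ≠ 1 := by
    intro h
    have := congrArg (fun σ : Equiv.Perm (Fin (n + 1)) => σ 0) h
    simp only [finRotate_apply, Equiv.Perm.one_apply] at this
    exact hne 0 this
  rw [Matrix.det_apply, Fintype.sum_eq_add 1 (finRotate (n + 1)) hrot.symm]
  · congr 1
    · simp [shiftMat, hne]
    · simp only [sign_finRotate, Matrix.add_apply, shiftMat, Matrix.of_apply,
        finRotate_apply, Matrix.scalar_apply]
      simp [hne, Units.smul_def]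
  · rintro σ ⟨h1, h2⟩
    have : ∃ i, ¬ (σ i = i ∨ σ i = i + 1) := by
      by_contra! hcon
      rcases perm_eq_one_or_finRotate σ (fun i => hcon i) with h | h
      · exact h1 h
      · exact h2 h
    obtain ⟨i, hi⟩ := this
    push Not at hi
    rw [Finset.prod_eq_zero (Finset.mem_univ i), smul_zero]
    simp [shiftMat, hi.1, Ne.symm hi.2]

/-- The node `3 j + r` of the ring, as a function of the pair `(r, j)`. -/
def node (m : ℕ) (p : Fin 3 × Fin m) : ZMod (3 * m) := ((3 * p.2.val + p.1.val : ℕ) : ZMod (3 * m))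

lemma natCast_eq_iff_of_lt {N a b : ℕ} (ha : a < N) (hb : b < N) :
    (a : ZMod N) = b ↔ a = b := by
  rw [ZMod.natCast_eq_natCast_iff', Nat.mod_eq_of_lt ha, Nat.mod_eq_of_lt hb]

lemma natCast_eq_add_one_iff {N a b : ℕ} (ha : a < N) (hb : b < N) :
    (a : ZMod N) = b + 1 ↔ a = b + 1 ∨ (a = 0 ∧ b + 1 = N) := by
  rw [← Nat.cast_succ, ZMod.natCast_eq_natCast_iff', Nat.mod_eq_of_lt ha]
  rcases Nat.lt_or_ge (b + 1) N with h | h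
  · rw [Nat.succ_eq_add_one, Nat.mod_eq_of_lt h]; omega
  · have : b + 1 = N := by omega
    rw [Nat.succ_eq_add_one, this, Nat.mod_self]; omega

lemma fin_add_one_eq_iff {n : ℕ} (j k : Fin (n + 1)) :
    k + 1 = j ↔ j.val = k.val + 1 ∨ (j.val = 0 ∧ k.val = n) := by
  rw [Fin.ext_iff, Fin.val_add_one]
  have := j.2
  have := k.2
  split_ifs with h
  · have h' : k.val = n := congrArg Fin.val h
    omega
  · have : k.val ≠ n := fun h' => h (Fin.ext h')
    omega

lemma node_lt {m : ℕ} (p : Fin 3 × Fin m) : 3 * p.2.val + p.1.val < 3 * m := by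
  have := p.1.2
  have := p.2.2
  omega

lemma node_bijective (m : ℕ) [NeZero (3 * m)] : Function.Bijective (node m) := by
  rw [Fintype.bijective_iff_injective_and_card]
  refine ⟨fun p q h => ?_, by simp [ZMod.card]⟩
  rw [node, node, natCast_eq_iff_of_lt (node_lt p) (node_lt q)] at h
  have := p.1.2
  have := q.1.2
  ext <;> omega

/-- The blocks of `X - L`, with the outer variable `X` standing for the shift and the polynomial
variable of `L` appearing as `C X`. -/
noncomputable def blocks : Matrix (Fin 3) (Fin 3) ℂ[X][X] :=
  !![C (X - 2), 1, X; 1, C (X - 1), 0; 0, 1, C (X - 1)]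

lemma det_blocks : blocks.det = C ((X - 1) * (X ^ 2 - 3 * X + 1)) + X := by
  rw [blocks, Matrix.det_fin_three]
  have h2 : (C (2 : ℂ[X]) : ℂ[X][X]) = 2 := map_ofNat C 2
  have h3 : (C (3 : ℂ[X]) : ℂ[X][X]) = 3 := map_ofNat C 3
  simp [h2, h3]
  ring

theorem stmt6 (m : ℕ) (hm : 2 ≤ m) :
    haveI : NeZero (3 * m) := ⟨by omega⟩
    (Matrix.of (fun i k : ZMod (3 * m) =>
        if k = i then (if i.val % 3 = 0 then (2 : ℂ) else 1)
        else if k = i - 1 then -1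
        else if k = i + 1 ∧ i.val % 3 = 0 then -1
        else 0)).charpoly
      = ((X - 1) * (X ^ 2 - 3 * X + 1)) ^ m - (-1) ^ m := by
  have : NeZero (3 * m) := ⟨by omega⟩
  obtain ⟨n, rfl⟩ : ∃ n, m = n + 1 := ⟨m - 1, by omega⟩
  let f : ℂ[X][X] →+* Matrix (Fin (n + 1)) (Fin (n + 1)) ℂ[X] :=
    (aeval (shiftMat ℂ[X] n)).toRingHom
  have hX : f X = shiftMat ℂ[X] n := aeval_X _
  have hC : ∀ p, f (C p) = Matrix.scalar _ p := fun p => aeval_C _ p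
  have key := Matrix.det_det blocks f
  rw [det_blocks, map_add, hX, hC, det_scalar_add_shift n (by omega)] at key
  rw [Matrix.charpoly,
    ← Matrix.det_submatrix_equiv_self (Equiv.ofBijective _ (node_bijective (n + 1)))]
  refine Eq.trans (congrArg Matrix.det ?_) (key.symm.trans (by ring))
  ext1 ⟨r, j⟩ ⟨s, k⟩
  have hv : (node (n + 1) (r, j)).val = 3 * j.val + r.val := ZMod.val_cast_of_lt (node_lt (r, j))
  have h0 : node (n + 1) (s, k) = node (n + 1) (r, j) ↔ s = r ∧ k = j := by
    rw [(node_bijective (n + 1)).1.eq_iff, Prod.mk.injEq]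
  have h1 : node (n + 1) (s, k) = node (n + 1) (r, j) - 1 ↔
      3 * j.val + r.val = 3 * k.val + s.val + 1 ∨
        (3 * j.val + r.val = 0 ∧ 3 * k.val + s.val + 1 = 3 * (n + 1)) := by
    rw [eq_sub_iff_add_eq, eq_comm]
    exact natCast_eq_add_one_iff (node_lt (r, j)) (node_lt (s, k))
  have h2 : node (n + 1) (s, k) = node (n + 1) (r, j) + 1 ↔
      3 * k.val + s.val = 3 * j.val + r.val + 1 ∨
        (3 * k.val + s.val = 0 ∧ 3 * j.val + r.val + 1 = 3 * (n + 1)) :=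
    natCast_eq_add_one_iff (node_lt (s, k)) (node_lt (r, j))
  have h3 := fin_add_one_eq_iff j k
  have hjk : k = j ↔ k.val = j.val := Fin.ext_iff
  have hj := j.2
  have hk := k.2
  simp only [Matrix.submatrix_apply, Equiv.ofBijective_apply, Matrix.charmatrix_apply,
    Matrix.of_apply, Matrix.diagonal_apply, Matrix.comp_apply, Matrix.map_apply, hv, h1, h2,
    eq_comm (a := node (n + 1) (r, j)), h0]
  fin_cases r <;> fin_cases s <;>
    simp [blocks, hX, hC, shiftMat, Matrix.diagonal_apply, Matrix.one_apply, h3, hjk,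
      eq_comm (a := j), -Fin.val_eq_zero_iff] <;>
    first
      | omega
      | (split_ifs <;> first | omega | simp | exact map_ofNat C 2)
end

section
/- Let m ≥ 2 and N = 3m. Let L be the N×N complex matrix indexed by ZMod N (the residue class of i modulo 3 is well defined on ZMod N since 3 divides N) with entries: L i i = 1 if i ≡ 2 (mod 3) and L i i = 2 otherwise; L i (i−1) = −1 for every i; L i (i+1) = −1 if i ≢ 2 (mod 3) and 0 otherwise; all other entries equal 0. Then the characteristic polynomial of L equals (X³ − 5X² + 6X − 1)^m − (−1)^m in ℂ[X]. -/
/-!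
Number the nodes as `3 * j + r` with `j : Fin m`, `r : Fin 3`. Then the characteristic matrix
`X - L` is `1 ⊗ B + P ⊗ E`, where `P` is the cyclic shift of the `m` blocks, `E` has a single
entry `1` in position `(0, 2)`, and `B` is the tridiagonal `3 × 3` block with diagonal
`X - 2, X - 2, X - 1`. There are polynomial matrices `R`, `C` of determinant one with
`R * B * C = diag(Z, 1, 1)` and `R * E * C = diag(1, 0, 0)`, where `Z = X³ - 5X² + 6X - 1`
is the determinant of `B`. Hence
multiplying by `1 ⊗ R` and `1 ⊗ C` turns `X - L` into a block diagonal matrix with blocks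
`Z + P`, `1`, `1`, and `det (X - L) = det (Z + P) = Z ^ m - (-1) ^ m` (`det_cyclic`).
-/

open Polynomial

open scoped Kronecker

/-- The matrix of the cyclic shift `j ↦ j + 1` on `m` points: the entry at `(i, j)` is `1` when
`i` is the cyclic successor of `j`. -/
def cyc (R : Type*) [CommRing R] (m : ℕ) : Matrix (Fin m) (Fin m) R :=
  Matrix.of fun i j =>
    if j.val + 1 = i.val ∨ (j.val + 1 = m ∧ i.val = 0) then 1 else 0

theorem smul_one_add_cyc_apply {R : Type*} [CommRing R] (m : ℕ) (z : R) (i j : Fin m) :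
    (z • (1 : Matrix (Fin m) (Fin m) R) + cyc R m) i j
      = (if i.val = j.val then z else 0)
        + (if j.val + 1 = i.val ∨ (j.val + 1 = m ∧ i.val = 0) then 1 else 0) := by
  rw [Matrix.add_apply, Matrix.smul_apply, Matrix.one_apply, cyc, Matrix.of_apply, smul_eq_mul,
    mul_ite, mul_one, mul_zero, ite_cond_congr (propext Fin.ext_iff)]

/-- Laplace expansion along row `0`, which meets only the first and the last column; both minors
are triangular. -/
theorem det_cyclic {R : Type*} [CommRing R] (n : ℕ) (z : R) :
    (z • (1 : Matrix (Fin (n + 1)) (Fin (n + 1)) R) + cyc R (n + 1)).det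
      = z ^ (n + 1) - (-1) ^ (n + 1) := by
  have hrow : ∀ j : Fin (n + 1),
      (z • (1 : Matrix (Fin (n + 1)) (Fin (n + 1)) R) + cyc R (n + 1)) 0 j
        = (if 0 = j then z else 0) + (if Fin.last n = j then 1 else 0) := by
    intro j
    rw [smul_one_add_cyc_apply]
    congr 1
    · exact if_congr Fin.ext_iff.symm rfl rfl
    · refine if_congr ?_ rfl rfl
      rw [Fin.ext_iff, Fin.val_last, Fin.val_zero]
      omega
  rw [Matrix.det_succ_row_zero]
  simp only [hrow, mul_add, add_mul, Finset.sum_add_distrib, mul_ite, ite_mul, mul_zero, zero_mul,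
    Finset.sum_ite_eq, Finset.mem_univ, if_true]
  have h0 : ((z • (1 : Matrix (Fin (n + 1)) (Fin (n + 1)) R) + cyc R (n + 1)).submatrix
      Fin.succ (Fin.succAbove 0)).det = z ^ n := by
    rw [Matrix.det_of_isLowerTriangular]
    · rw [Finset.prod_congr rfl (g := fun _ => z)]
      · simp
      · intro i _
        rw [Matrix.submatrix_apply, smul_one_add_cyc_apply, Fin.succAbove_zero, if_pos rfl,
          if_neg (by simp only [Fin.val_succ]; omega), add_zero]
    · intro i j hij
      have hij' : (i : ℕ) < j := hij
      rw [Matrix.submatrix_apply, smul_one_add_cyc_apply, Fin.succAbove_zero,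
        if_neg (by simp only [Fin.val_succ]; omega),
        if_neg (by simp only [Fin.val_succ]; omega), add_zero]
  have h1 : ((z • (1 : Matrix (Fin (n + 1)) (Fin (n + 1)) R) + cyc R (n + 1)).submatrix
      Fin.succ (Fin.succAbove (Fin.last n))).det = 1 := by
    rw [Matrix.det_of_isUpperTriangular]
    · refine Finset.prod_eq_one fun i _ => ?_
      rw [Matrix.submatrix_apply, smul_one_add_cyc_apply, Fin.succAbove_last,
        if_neg (by simp only [Fin.val_succ, Fin.val_castSucc]; omega),
        if_pos (by simp only [Fin.val_succ, Fin.val_castSucc, true_or]), zero_add]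
    · intro i j hij
      have hij' : (j : ℕ) < i := hij
      rw [Matrix.submatrix_apply, smul_one_add_cyc_apply, Fin.succAbove_last,
        if_neg (by simp only [Fin.val_succ, Fin.val_castSucc]; omega),
        if_neg (by simp only [Fin.val_succ, Fin.val_castSucc]; omega), add_zero]
  rw [h0, h1, Fin.val_zero, Fin.val_last]
  ring

/-- The diagonal block of the characteristic matrix. -/
noncomputable def blkB : Matrix (Fin 3) (Fin 3) ℂ[X] :=
  !![X - 2, 1, 0; 1, X - 2, 1; 0, 1, X - 1]

/-- The coupling of a block to the preceding one. -/
noncomputable def blkE : Matrix (Fin 3) (Fin 3) ℂ[X] :=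
  !![0, 0, 1; 0, 0, 0; 0, 0, 0]

/-- Row operations of determinant one. -/
noncomputable def blkR : Matrix (Fin 3) (Fin 3) ℂ[X] :=
  !![1, -(X - 2), (X - 2) ^ 2 - 1; 0, 1, -(X - 2); 0, 0, 1]

/-- Column operations of determinant one. The first column is the vector `w` with
`blkB *ᵥ w = (det blkB, 0, 0)`. -/
noncomputable def blkC : Matrix (Fin 3) (Fin 3) ℂ[X] :=
  !![X ^ 2 - 3 * X + 1, 1, 0; -(X - 1), 0, 1; 1, 0, 0]

theorem det_blkR : blkR.det = 1 := by
  simp [blkR, Matrix.det_fin_three]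

theorem det_blkC : blkC.det = 1 := by
  simp [blkC, Matrix.det_fin_three]

theorem blkR_blkB_blkC :
    blkR * blkB * blkC = !![X ^ 3 - 5 * X ^ 2 + 6 * X - 1, 0, 0; 0, 1, 0; 0, 0, 1] := by
  ext1 i j
  fin_cases i <;> fin_cases j <;>
    simp [blkR, blkB, blkC, Matrix.mul_apply, Fin.sum_univ_three] <;> ring

theorem blkR_blkE_blkC :
    blkR * blkE * blkC = !![1, 0, 0; 0, 0, 0; 0, 0, 0] := by
  ext1 i j
  fin_cases i <;> fin_cases j <;>
    simp [blkR, blkE, blkC, Matrix.mul_apply, Fin.sum_univ_three]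

theorem det_block_s8 (n : ℕ) :
    ((1 : Matrix (Fin (n + 1)) (Fin (n + 1)) ℂ[X]) ⊗ₖ blkB + cyc ℂ[X] (n + 1) ⊗ₖ blkE).det
      = (X ^ 3 - 5 * X ^ 2 + 6 * X - 1) ^ (n + 1) - (-1) ^ (n + 1) := by
  set M := (1 : Matrix (Fin (n + 1)) (Fin (n + 1)) ℂ[X]) ⊗ₖ blkB + cyc ℂ[X] (n + 1) ⊗ₖ blkE
    with hM
  have h1 : ((1 : Matrix (Fin (n + 1)) (Fin (n + 1)) ℂ[X]) ⊗ₖ blkR) * M *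
      ((1 : Matrix (Fin (n + 1)) (Fin (n + 1)) ℂ[X]) ⊗ₖ blkC)
      = Matrix.blockDiagonal (fun k : Fin 3 => if k = 0 then
          ((X ^ 3 - 5 * X ^ 2 + 6 * X - 1 : ℂ[X]) • (1 : Matrix (Fin (n + 1)) (Fin (n + 1)) ℂ[X])
            + cyc ℂ[X] (n + 1)) else 1) := by
    rw [hM, mul_add, add_mul]
    simp only [← Matrix.mul_kronecker_mul, one_mul, mul_one, blkR_blkB_blkC, blkR_blkE_blkC]
    ext1 ⟨i, r⟩ ⟨j, s⟩
    fin_cases r <;> fin_cases s <;>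
      simp [Matrix.blockDiagonal_apply]
    rw [Matrix.one_apply, mul_comm]
  have h2 := congrArg Matrix.det h1
  rw [Matrix.det_mul, Matrix.det_mul, Matrix.det_kronecker, Matrix.det_kronecker, det_blkR,
    det_blkC, Matrix.det_blockDiagonal, Fin.prod_univ_three] at h2
  simpa [det_cyclic] using h2

/-- The numbering `(j, r) ↦ 3 * j + r` of the nodes of the ring. -/
def nodeEquiv (m : ℕ) [NeZero (3 * m)] : Fin m × Fin 3 ≃ ZMod (3 * m) where
  toFun p := ((3 * p.1.val + p.2.val : ℕ) : ZMod (3 * m))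
  invFun i := (⟨i.val / 3, by have := ZMod.val_lt i; omega⟩, ⟨i.val % 3, by omega⟩)
  left_inv := by
    rintro ⟨j, r⟩
    have hv : ((3 * j.val + r.val : ℕ) : ZMod (3 * m)).val = 3 * j.val + r.val :=
      ZMod.val_natCast_of_lt (by omega)
    simp only [Prod.mk.injEq, Fin.ext_iff, hv]
    omega
  right_inv i := by
    simp only [Nat.div_add_mod]
    exact ZMod.natCast_zmod_val i

theorem nodeEquiv_val (m : ℕ) [NeZero (3 * m)] (j : Fin m) (r : Fin 3) :
    (nodeEquiv m (j, r)).val = 3 * j.val + r.val :=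
  ZMod.val_natCast_of_lt (by omega)

theorem eq_add_one_iff_val {N : ℕ} [NeZero N] (hN : 2 ≤ N) (a b : ZMod N) :
    a = b + 1 ↔ b.val + 1 = a.val ∨ (b.val + 1 = N ∧ a.val = 0) := by
  have : Fact (1 < N) := ⟨hN⟩
  have ha := ZMod.val_lt a
  have hb := ZMod.val_lt b
  rw [← (ZMod.val_injective N).eq_iff, ZMod.val_add, ZMod.val_one]
  rcases Nat.lt_or_ge (b.val + 1) N with h | h
  · rw [Nat.mod_eq_of_lt h]; omega
  · have : b.val + 1 = N := by omega
    rw [this, Nat.mod_self]; omega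

theorem stmt8 (m : ℕ) (hm : 2 ≤ m) :
    haveI : NeZero (3 * m) := ⟨by omega⟩
    (Matrix.of (fun i k : ZMod (3 * m) =>
        if k = i then (if i.val % 3 = 2 then (1 : ℂ) else 2)
        else if k = i - 1 then -1
        else if k = i + 1 ∧ i.val % 3 ≠ 2 then -1
        else 0)).charpoly
      = (X ^ 3 - 5 * X ^ 2 + 6 * X - 1) ^ m - (-1) ^ m := by
  have : NeZero (3 * m) := ⟨by omega⟩
  obtain ⟨n, rfl⟩ : ∃ n, m = n + 1 := ⟨m - 1, by omega⟩
  -- After renumbering, the claim is an entrywise comparison, split by the residues `r`, `s`.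
  rw [← det_block_s8, Matrix.charpoly, ← Matrix.det_submatrix_equiv_self (nodeEquiv (n + 1))]
  congr 1
  ext1 ⟨i, r⟩ ⟨j, s⟩
  have hi := i.2
  have hj := j.2
  simp only [Matrix.submatrix_apply, Matrix.charmatrix_apply, Matrix.diagonal_apply,
    Matrix.of_apply, Matrix.add_apply, Matrix.kroneckerMap_apply, Matrix.one_apply, cyc,
    eq_sub_iff_add_eq, eq_comm (b := nodeEquiv (n + 1) (i, r)),
    eq_add_one_iff_val (show 2 ≤ 3 * (n + 1) by omega), nodeEquiv_val,
    (nodeEquiv (n + 1)).injective.eq_iff, Prod.mk.injEq]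
  fin_cases r <;> fin_cases s
  all_goals
    simp only [blkB, blkE, Fin.ext_iff, Fin.zero_eta, Fin.mk_one, Fin.reduceFinMk, Fin.isValue,
      Fin.val_zero, Fin.val_one, Fin.val_two, Matrix.of_apply, Matrix.cons_val,
      mul_one, mul_zero, ite_mul, one_mul, zero_mul, and_true]
    split_ifs <;> first
      | (exfalso; omega)
      | (exfalso; simp only [and_false, or_false] at * <;> omega)
      | simp [show (C 2 : ℂ[X]) = 2 from rfl]
end

section
/- Let N ≥ 1, let c ∈ ℝ with 0 ≤ c < 1, let P be the N×N complex circulant permutation matrix indexed by ZMod N with P i k = 1 if k = i − 1 and P i k = 0 otherwise, and let L = (1+c)·I − P − c·P^{N−1}. Then every eigenvalue λ ∈ ℂ of L satisfies (Re λ − (1+c))²/(1+c)² + (Im λ)²/(1−c)² = 1; that is, the spectrum of L lies on the ellipse centered at (1+c, 0) with horizontal semi-axis 1+c and vertical semi-axis 1−c. -/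
/-!
With `P ^ N = 1` and `L = p(P)` for the polynomial `p = (1 + c) - X - c X ^ (N - 1)`, the spectral
mapping theorem shows that every eigenvalue of `L` is `p(μ)` with `μ` an eigenvalue of `P`, and that
`μ ^ N = 1`. So `‖μ‖ = 1` and `μ ^ (N - 1)` is the conjugate of `μ`. Hence
`p(μ) - (1 + c) = -μ - c * conj μ` has real part `-(1 + c) * re μ` and imaginary part
`-(1 - c) * im μ`, and the ellipse equation reduces to `(re μ) ^ 2 + (im μ) ^ 2 = 1`.
-/

lemma shift_pow (N : ℕ) [NeZero N] (n : ℕ) :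
    (Matrix.of fun i k : ZMod N => if k = i - 1 then (1 : ℂ) else 0) ^ n =
      Matrix.of fun i k : ZMod N => if k = i - n then (1 : ℂ) else 0 := by
  induction n with
  | zero => ext i k; simp [Matrix.one_apply, eq_comm]
  | succ n ih =>
    ext i k
    rw [pow_succ, ih, Matrix.mul_apply, Finset.sum_eq_single (i - (n : ZMod N))]
    · simp [sub_sub]
    · intro j _ hj
      simp [hj]
    · simp

theorem stmt11 (N : ℕ) (hN : 1 ≤ N) (c : ℝ) (hc0 : 0 ≤ c) (hc1 : c < 1) (lam : ℂ) :
    haveI : NeZero N := ⟨by omega⟩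
    let P : Matrix (ZMod N) (ZMod N) ℂ :=
      Matrix.of fun i k : ZMod N => if k = i - 1 then 1 else 0
    let L : Matrix (ZMod N) (ZMod N) ℂ :=
      (1 + (c : ℂ)) • (1 : Matrix (ZMod N) (ZMod N) ℂ) - P - (c : ℂ) • P ^ (N - 1)
    L.charpoly.IsRoot lam →
      (lam.re - (1 + c)) ^ 2 / (1 + c) ^ 2 + lam.im ^ 2 / (1 - c) ^ 2 = 1 := by
  have : NeZero N := ⟨by omega⟩
  intro P L hroot
  have hPN : P ^ N = 1 := by
    rw [shift_pow N N]
    ext i k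
    simp [Matrix.one_apply, eq_comm]
  have hL : L = Polynomial.aeval P
      (Polynomial.C (1 + (c : ℂ)) - Polynomial.X - Polynomial.C (c : ℂ) * Polynomial.X ^ (N - 1)) := by
    simp [L, Algebra.smul_def]
  have hspec : lam ∈ spectrum ℂ L := Matrix.mem_spectrum_iff_isRoot_charpoly.mpr hroot
  rw [hL, spectrum.map_polynomial_aeval_of_nonempty _ _
    (spectrum.nonempty_of_isAlgClosed_of_finiteDimensional ℂ P)] at hspec
  obtain ⟨μ, hμ, rfl⟩ := hspec
  have hμN : μ ^ N = 1 := by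
    have h := spectrum.pow_mem_pow P N hμ
    rwa [hPN, spectrum.one_eq, Set.mem_singleton_iff] at h
  have hnorm : ‖μ‖ = 1 := Complex.norm_eq_one_of_pow_eq_one hμN (by omega)
  have hconj : μ ^ (N - 1) = (starRingEnd ℂ) μ := by
    rw [← Complex.inv_eq_conj hnorm]
    refine eq_inv_of_mul_eq_one_left ?_
    rw [← pow_succ, Nat.sub_add_cancel hN, hμN]
  have hsq : μ.re ^ 2 + μ.im ^ 2 = 1 := by
    have h := Complex.sq_norm μ
    rw [hnorm, Complex.normSq_apply] at h
    linarith
  have h1 : 1 + c ≠ 0 := by linarith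
  have h2 : 1 - c ≠ 0 := by linarith
  simp only [Polynomial.eval_sub, Polynomial.eval_mul, Polynomial.eval_C, Polynomial.eval_X,
    Polynomial.eval_pow, hconj]
  have hre : ((1 + (c : ℂ)) - μ - c * (starRingEnd ℂ) μ).re - (1 + c) = (1 + c) * (-μ.re) := by
    simp; ring
  have him : ((1 + (c : ℂ)) - μ - c * (starRingEnd ℂ) μ).im = (1 - c) * (-μ.im) := by
    simp; ring
  rw [hre, him, mul_pow, mul_pow, mul_div_cancel_left₀ _ (pow_ne_zero 2 h1),
    mul_div_cancel_left₀ _ (pow_ne_zero 2 h2)]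
  linarith
end

section
/- For every c ∈ ℝ with 0 ≤ c ≤ 1, set x = (1+c)(3+c)/2 and y = (1−c)·√((1−c)(3+c))/2. Then: (i) √(1+2x) = c + 2; (ii) if c < 1, the point (x, y) satisfies (x−(1+c))²/(1+c)² + y²/(1−c)² = 1; and (iii) y = (1/√2)·(3 − √(1+2x))·√(√(1+2x) − x + 1). -/
/-!
Everything follows from two polynomial identities for `x = (1 + c)(3 + c)/2`:
`1 + 2x = (c + 2)²`, and hence `√(1 + 2x) - x + 1 = (1 - c)(3 + c)/2`. The ellipse equation
then reduces to `(1 + c)²/4 + (1 - c)(3 + c)/4 = 1`.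
-/

theorem stmt14 (c : ℝ) (hc0 : 0 ≤ c) (hc1 : c ≤ 1) :
    let x : ℝ := (1 + c) * (3 + c) / 2
    let y : ℝ := (1 - c) * Real.sqrt ((1 - c) * (3 + c)) / 2
    Real.sqrt (1 + 2 * x) = c + 2 ∧
    (c < 1 → (x - (1 + c)) ^ 2 / (1 + c) ^ 2 + y ^ 2 / (1 - c) ^ 2 = 1) ∧
    y = (1 / Real.sqrt 2) * (3 - Real.sqrt (1 + 2 * x)) *
        Real.sqrt (Real.sqrt (1 + 2 * x) - x + 1) := by
  intro x y
  have hP : 0 ≤ (1 - c) * (3 + c) := mul_nonneg (by linarith) (by linarith)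
  have h1 : Real.sqrt (1 + 2 * x) = c + 2 := by
    rw [show 1 + 2 * x = (c + 2) ^ 2 by simp only [x]; ring]
    exact Real.sqrt_sq (by linarith)
  refine ⟨h1, fun hc => ?_, ?_⟩
  · have ha : 1 + c ≠ 0 := by linarith
    have hb : 1 - c ≠ 0 := by linarith
    have hx : (x - (1 + c)) ^ 2 / (1 + c) ^ 2 = (1 + c) ^ 2 / 4 := by
      simp only [x]
      field_simp
      ring
    have hy : y ^ 2 / (1 - c) ^ 2 = (1 - c) * (3 + c) / 4 := by
      simp only [y]
      rw [div_pow, mul_pow, Real.sq_sqrt hP]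
      field_simp
      ring
    rw [hx, hy]
    ring
  · rw [h1, show c + 2 - x + 1 = (1 - c) * (3 + c) / 2 by simp only [x]; ring,
      Real.sqrt_div hP]
    simp only [y]
    have h2 : Real.sqrt 2 * Real.sqrt 2 = 2 := Real.mul_self_sqrt (by norm_num)
    calc (1 - c) * Real.sqrt ((1 - c) * (3 + c)) / 2
        = (1 - c) * Real.sqrt ((1 - c) * (3 + c)) / (Real.sqrt 2 * Real.sqrt 2) := by rw [h2]
      _ = _ := by ring
end

section
/- For all real numbers γ > 0 and r > 0, the following are equivalent: (i) for every (x, y) ∈ ℝ² with (x + r)² + y² = r² and (x, y) ≠ (0, 0), one has y² < −γ²·x; (ii) 2r ≤ γ². -/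
/-! On the circle `y² = -x² - 2rx`, so `-γ²x - y² = x² + (-x)(γ² - 2r)`. Every point of the circle
other than the origin has `x < 0`, so this is positive when `2r ≤ γ²`; when `γ² < 2r` it vanishes
at `x = γ² - 2r`, which lies in `(-2r, 0)` and hence is the abscissa of a point of the circle. -/

theorem stmt15 (γ r : ℝ) (hγ : 0 < γ) (hr : 0 < r) :
    (∀ x y : ℝ, (x + r) ^ 2 + y ^ 2 = r ^ 2 → (x, y) ≠ (0, 0) →
      y ^ 2 < -(γ ^ 2 * x)) ↔ 2 * r ≤ γ ^ 2 := by
  constructor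
  · intro h
    by_contra! hlt
    -- The circle meets the parabola `y² = -γ²x` at `x = γ² - 2r`, `y = γ √(2r - γ²)`.
    have hy : (γ * √(2 * r - γ ^ 2)) ^ 2 = γ ^ 2 * (2 * r - γ ^ 2) := by
      rw [mul_pow, Real.sq_sqrt (by linarith)]
    have h1 := h (γ ^ 2 - 2 * r) (γ * √(2 * r - γ ^ 2)) (by rw [hy]; ring) (by
      intro h0
      have h2 : γ ^ 2 - 2 * r = 0 := congrArg Prod.fst h0
      linarith)
    rw [hy] at h1
    linarith
  · intro h x y hxy hne
    have hx : x < 0 := by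
      by_contra! hx
      have hrx : 0 ≤ r * x := mul_nonneg hr.le hx
      have hx0 : x = 0 := by
        apply pow_eq_zero_iff two_ne_zero |>.mp
        nlinarith [sq_nonneg x, sq_nonneg y]
      have hy0 : y = 0 := by
        apply pow_eq_zero_iff two_ne_zero |>.mp
        nlinarith [sq_nonneg x, sq_nonneg y]
      exact hne (by rw [hx0, hy0])
    have h1 : 0 ≤ -x * (γ ^ 2 - 2 * r) := mul_nonneg (by linarith) (by linarith)
    have h2 : 0 < x ^ 2 := by nlinarith
    linarith
end

section
/- Let γ > 0 and r > 0 be real numbers, and set x₀ = −2r/(1 + 2rγ²) and y₀ = √(r² − (x₀ + r)²). Then: (i) γ²x₀ + 1 > 0; (ii) (x₀ + r)² + y₀² = r²; (iii) y₀²·(γ²x₀ + 1) = −γ²·x₀³ (i.e., the point (x₀, y₀) lies on the curve y² = −γ²x³/(γ²x + 1)); (iv) y₀ ≠ 0; and (v) every (x, y) ∈ ℝ² with x ≠ 0 satisfying both (x + r)² + y² = r² and y²·(γ²x + 1) = −γ²·x³ has x = x₀. In particular, the circle of radius r centered at (−r, 0) always intersects the boundary of the consensus region at a nonzero point. -/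
/-!
Write `D = 1 + 2 r γ² > 0`. On the circle `y² = -x (x + 2 r)`; substituting this into the curve
equation cancels the cubic terms and leaves `x (D x + 2 r) = 0`, so `x₀ = -2 r / D` is the only
nonzero root. Conversely, `D x₀ = -2 r` gives `r² - (x₀ + r)² = 2 r γ² x₀² > 0`, so `y₀` is the
square root of a positive number, and `D (γ² x₀ + 1) = 1`.
-/

theorem stmt17 (γ r : ℝ) (hγ : 0 < γ) (hr : 0 < r) :
    let x₀ : ℝ := -2 * r / (1 + 2 * r * γ ^ 2)
    let y₀ : ℝ := Real.sqrt (r ^ 2 - (x₀ + r) ^ 2)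
    γ ^ 2 * x₀ + 1 > 0 ∧
    (x₀ + r) ^ 2 + y₀ ^ 2 = r ^ 2 ∧
    y₀ ^ 2 * (γ ^ 2 * x₀ + 1) = -(γ ^ 2 * x₀ ^ 3) ∧
    y₀ ≠ 0 ∧
    (∀ x y : ℝ, x ≠ 0 → (x + r) ^ 2 + y ^ 2 = r ^ 2 →
      y ^ 2 * (γ ^ 2 * x + 1) = -(γ ^ 2 * x ^ 3) → x = x₀) := by
  intro x₀ y₀
  have hD : 0 < 1 + 2 * r * γ ^ 2 := by positivity
  have hx : x₀ * (1 + 2 * r * γ ^ 2) = -2 * r := div_mul_cancel₀ _ hD.ne'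
  have hx0 : x₀ ≠ 0 := by
    intro h
    rw [h] at hx
    linarith
  have hrad : r ^ 2 - (x₀ + r) ^ 2 = 2 * r * γ ^ 2 * x₀ ^ 2 := by
    linear_combination (-x₀) * hx
  have hpos : 0 < r ^ 2 - (x₀ + r) ^ 2 := by
    rw [hrad]
    positivity
  have hy : y₀ ^ 2 = r ^ 2 - (x₀ + r) ^ 2 := Real.sq_sqrt hpos.le
  refine ⟨?_, by linarith, ?_, (Real.sqrt_pos.mpr hpos).ne', ?_⟩
  · have h1 : (γ ^ 2 * x₀ + 1) * (1 + 2 * r * γ ^ 2) = 1 := by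
      linear_combination γ ^ 2 * hx
    exact pos_of_mul_pos_left (one_pos.trans_eq h1.symm) hD.le
  · rw [hy]
    linear_combination (-x₀) * hx
  · intro x y hxne hc hb
    refine (eq_div_iff hD.ne').mpr (mul_left_cancel₀ hxne ?_)
    linear_combination (γ ^ 2 * x + 1) * hc - hb
end

section
/- For all real numbers γ > 0 and r > 0, the following are equivalent: (i) for every (x, y) ∈ ℝ² with (x + r)² + y² = r² and (x, y) ≠ (0, 0), one has γ·(γx + 2)·y² < −x·(1 + γx)²; (ii) 4rγ ≤ 1. -/
/-!
On the circle `y² = -x (x + 2r)`, and every point other than the origin has `x < 0`. Substituting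
for `y²` and dividing by `-x > 0`, the quadratic terms cancel and the inequality becomes the linear
condition `4rγ + 2rγ²x < 1`. It holds for all `x < 0` when `4rγ ≤ 1`. When `4rγ > 1`, equality is
attained at `x = -(4rγ - 1) / (2rγ²) < 0`, which is the abscissa of a point of the circle because
`x ≥ -2r` amounts to `(2rγ - 1)² ≥ 0`.
-/

theorem stmt18 (γ r : ℝ) (hγ : 0 < γ) (hr : 0 < r) :
    (∀ x y : ℝ, (x + r) ^ 2 + y ^ 2 = r ^ 2 → (x, y) ≠ (0, 0) →
      γ * (γ * x + 2) * y ^ 2 < -(x * (1 + γ * x) ^ 2)) ↔ 4 * r * γ ≤ 1 := by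
  constructor
  · intro h
    by_contra! hc
    obtain ⟨x, hx⟩ : ∃ x : ℝ, x = -((4 * r * γ - 1) / (2 * r * γ ^ 2)) := ⟨_, rfl⟩
    have hlin : 2 * r * γ ^ 2 * x = 1 - 4 * r * γ := by
      rw [hx]; field_simp; ring
    have hx0 : x < 0 := by
      rw [hx, neg_lt_zero]
      exact div_pos (by linarith) (by positivity)
    have hx2 : 0 ≤ x + 2 * r := by
      have hp : 0 < 2 * r * γ ^ 2 := by positivity
      refine nonneg_of_mul_nonneg_right (a := 2 * r * γ ^ 2) ?_ hp
      nlinarith [sq_nonneg (2 * r * γ - 1)]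
    have hy : √(-x * (x + 2 * r)) ^ 2 = -x * (x + 2 * r) :=
      Real.sq_sqrt (mul_nonneg (by linarith) hx2)
    have hlt := h x (√(-x * (x + 2 * r))) (by rw [hy]; ring)
      (fun he => hx0.ne (Prod.ext_iff.mp he).1)
    rw [hy] at hlt
    have heq : γ * (γ * x + 2) * (-x * (x + 2 * r)) = -(x * (1 + γ * x) ^ 2) := by
      linear_combination -x * hlin
    exact hlt.ne heq
  · intro h x y hxy hne
    have hy : y ^ 2 = -x * (x + 2 * r) := by linear_combination hxy
    have hx0 : x < 0 := by
      by_contra! hx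
      have hy0 : y ^ 2 = 0 := by nlinarith [sq_nonneg y, mul_nonneg hx hr.le]
      have hxx : x = 0 := by
        have hz : x * (x + 2 * r) = 0 := by linarith
        exact (mul_eq_zero.mp hz).resolve_right (by linarith)
      exact hne (by rw [hxx, pow_eq_zero_iff two_ne_zero |>.mp hy0])
    have hlin : 0 < 1 - 4 * r * γ - 2 * r * γ ^ 2 * x := by
      have : 0 < 2 * r * γ ^ 2 * -x := mul_pos (by positivity) (by linarith)
      linarith
    rw [hy]
    linarith [mul_pos (neg_pos.mpr hx0) hlin]
end
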